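/- Let d ≥ 2, let k be an integer with 1 ≤ k ≤ d, and a, b ∈ ℝ. Then ρ^{(d)}_{a,b} ∈ Sch_k if and only if for all p, q ∈ ℝ such that L^{(d)}_{p,q} is k-positive, one has (d+1)(pa + qb) + (pb + qa) ≥ −1/(d−1). -/

import Mathlib

open Matrix
open scoped ComplexOrder

noncomputable section

/-- The ampliation `id_{M_k} ⊗ L` of a map `L` applied to a bipartite matrix, blockwise. -/
def idTensor {k m n : ℕ} (L : Matrix (Fin m) (Fin m) ℂ →ₗ[ℂ] Matrix (Fin n) (Fin n) ℂ)
    (X : Matrix (Fin k × Fin m) (Fin k × Fin m) ℂ) : Matrix (Fin k × Fin n) (Fin k × Fin n) ℂ :=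
  Matrix.of fun p q => L (Matrix.of fun a b => X (p.1, a) (q.1, b)) p.2 q.2

/-- `L` is `k`-positive if `id_{M_k} ⊗ L` sends positive semidefinite matrices to positive
semidefinite matrices. -/
def IsKPositive {m n : ℕ} (k : ℕ)
    (L : Matrix (Fin m) (Fin m) ℂ →ₗ[ℂ] Matrix (Fin n) (Fin n) ℂ) : Prop :=
  ∀ X : Matrix (Fin k × Fin m) (Fin k × Fin m) ℂ, X.PosSemidef → (idTensor L X).PosSemidef

/-- The linear map `L^{(d)}_{p,q}(Z) = (1-p-q) (Tr Z / d) I_d + p Z + q Zᵀ`. -/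
def Lmap (d : ℕ) (p q : ℝ) :
    Matrix (Fin d) (Fin d) ℂ →ₗ[ℂ] Matrix (Fin d) (Fin d) ℂ :=
  ((((1 - p - q : ℝ) : ℂ) / (d : ℂ)) •
      (Matrix.traceLinearMap (Fin d) ℂ ℂ).smulRight (1 : Matrix (Fin d) (Fin d) ℂ))
    + ((p : ℝ) : ℂ) • LinearMap.id
    + ((q : ℝ) : ℂ) • (Matrix.transposeLinearEquiv (Fin d) (Fin d) ℂ ℂ).toLinearMap

/-- The maximally entangled vector `|Ω_d⟩ = (1/√d) ∑_j |jj⟩`. -/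
def omegaVec (d : ℕ) : Fin d × Fin d → ℂ :=
  fun p => if p.1 = p.2 then ((1 / Real.sqrt d : ℝ) : ℂ) else 0

/-- The flip operator `F_d = ∑_{i,j} |ij⟩⟨ji|`. -/
def flipMatrix (d : ℕ) : Matrix (Fin d × Fin d) (Fin d × Fin d) ℂ :=
  Matrix.of fun p q => if p.1 = q.2 ∧ p.2 = q.1 then 1 else 0

/-- The orthogonally invariant operators
`ρ^{(d)}_{a,b} = ((1-a-b)/d²) I + a |Ω_d⟩⟨Ω_d| + (b/d) F_d`. -/
def rho (d : ℕ) (a b : ℝ) : Matrix (Fin d × Fin d) (Fin d × Fin d) ℂ :=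
  ((((1 - a - b : ℝ) : ℂ) / ((d : ℂ) ^ 2)) • (1 : Matrix (Fin d × Fin d) (Fin d × Fin d) ℂ))
    + (((a : ℝ) : ℂ) • Matrix.vecMulVec (omegaVec d) (star (omegaVec d)))
    + ((((b : ℝ) : ℂ) / (d : ℂ)) • flipMatrix d)

/-- `Sch_k`: finite sums of rank-one operators `|ξ⟩⟨ξ|` with Schmidt rank `SR(ξ) ≤ k`,
where `SR(ξ)` is the rank of the `d_A × d_B` coefficient matrix of `ξ ∈ ℂ^{d_A} ⊗ ℂ^{d_B}`. -/
def SchmidtSet (dA dB k : ℕ) : Set (Matrix (Fin dA × Fin dB) (Fin dA × Fin dB) ℂ) :=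
  {X | ∃ (N : ℕ) (ξ : Fin N → (Fin dA × Fin dB → ℂ)),
    (∀ i, (Matrix.of fun a b => ξ i (a, b)).rank ≤ k) ∧
    X = ∑ i, Matrix.vecMulVec (ξ i) (star (ξ i))}

/-!
The Choi matrix of `L_{p,q}` is `d` times the operator `ρ_{p,q}`, and `L` is `k`-positive exactly
when its Choi matrix has nonnegative trace pairing with every element of `Sch_k`. The stated
inequality is the nonnegativity of the pairing of `ρ_{a,b}` with the Choi matrix of `L_{p,q}`, so
one direction is immediate.

Conversely, `Sch_k` is a closed convex cone: by Carathéodory it is the image of a closed set under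
the proper map `(ξ_i) ↦ ∑ |ξ_i⟩⟨ξ_i|`. If `ρ_{a,b} ∉ Sch_k`, let `P` be the point of `Sch_k`
nearest to it. Then `W = P - ρ_{a,b}` separates `ρ_{a,b}` from `Sch_k`, and by uniqueness of the
nearest point `W` inherits every symmetry of the pair, in particular invariance under conjugation
by `O ⊗ O` for real orthogonal `O`. No averaging over the orthogonal group is needed. Sign changes,
permutations and a single reflection already force such a `W` into the span of `I`, `|Ω⟩⟨Ω|` and
`F`, which up to a perturbation by `I` and a rescaling makes it the Choi matrix of some `L_{p,q}`.
-/

section ConvexGeometry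

variable {E : Type*}

/- Carathéodory for cones: a sum of `N` points `x i` is the average of the points `N • x i`, hence
lies in the convex hull of `S`. -/
theorem exists_finrank_succ_sum_eq [AddCommGroup E] [Module ℝ E] [FiniteDimensional ℝ E]
    {S : Set E} (zero_mem : 0 ∈ S) (smul_mem : ∀ t : ℝ, 0 ≤ t → ∀ x ∈ S, t • x ∈ S)
    {ι : Type*} [Fintype ι] {x : ι → E} (hx : ∀ i, x i ∈ S) :
    ∃ y : Fin (Module.finrank ℝ E + 1) → E, (∀ j, y j ∈ S) ∧ ∑ j, y j = ∑ i, x i := by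
  classical
  rcases isEmpty_or_nonempty ι with _ | _
  · exact ⟨0, fun _ => zero_mem, by simp⟩
  have hcard : (Fintype.card ι : ℝ) ≠ 0 := by exact_mod_cast Fintype.card_ne_zero
  have hmem : ∑ i, x i ∈ convexHull ℝ S := by
    have hcomb : ∑ i, x i = ∑ i, (Fintype.card ι : ℝ)⁻¹ • (Fintype.card ι : ℝ) • x i := by
      simp only [smul_smul, inv_mul_cancel₀ hcard, one_smul]
    rw [hcomb]
    exact (convex_convexHull ℝ S).sum_mem (fun _ _ => by positivity) (by simp [hcard])
      fun i _ => subset_convexHull ℝ S (smul_mem _ (by positivity) _ (hx i))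
  obtain ⟨κ, _, z, w, hzS, hz, hw, -, hsum⟩ := eq_pos_convex_span_of_mem_convexHull hmem
  have hκ : Fintype.card κ ≤ Fintype.card (Fin (Module.finrank ℝ E + 1)) := by
    simpa only [Fintype.card_fin] using
      hz.card_le_finrank_succ.trans (Nat.succ_le_succ (Submodule.finrank_le _))
  obtain ⟨e⟩ := Function.Embedding.nonempty_of_card_le hκ
  refine ⟨Function.extend e (fun i => w i • z i) 0, fun j => ?_, ?_⟩
  · by_cases hj : ∃ i, e i = j
    · obtain ⟨i, rfl⟩ := hj
      rw [e.injective.extend_apply]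
      exact smul_mem _ (hw i).le _ (hzS ⟨i, rfl⟩)
    · rw [Function.extend_apply' _ _ _ hj]
      exact zero_mem
  · rw [← hsum]
    refine (Fintype.sum_of_injective e e.injective _ _ (fun j hj => ?_) fun i => ?_).symm
    · exact Function.extend_apply' _ _ _ hj
    · rw [e.injective.extend_apply]

variable [NormedAddCommGroup E] [InnerProductSpace ℝ E]

theorem linearIsometry_fixes_of_inner_nonpos (U : E →ₗᵢ[ℝ] E) {x p : E} (hx : U x = x)
    (hp : inner ℝ (x - p) (U p - p) ≤ 0) : U p = p := by
  have hnorm : ‖x - U p‖ = ‖x - p‖ := by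
    rw [← U.norm_map (x - p), map_sub, hx]
  have hsq : ‖x - U p‖ ^ 2 =
      ‖x - p‖ ^ 2 - 2 * inner ℝ (x - p) (U p - p) + ‖U p - p‖ ^ 2 := by
    rw [← norm_sub_sq_real, sub_sub_sub_cancel_right]
  rw [hnorm] at hsq
  have : ‖U p - p‖ ^ 2 ≤ 0 := by linarith
  rwa [sq_nonpos_iff, norm_eq_zero, sub_eq_zero] at this

/- The functional is `p - x`, where `p` is the point of `C` nearest to `x`; a symmetry of `C`
fixing `x` also fixes `p`. -/
theorem exists_invariant_separating_of_notMem [CompleteSpace E] (C : ProperCone ℝ E) {x : E}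
    (hx : x ∉ C) :
    ∃ w : E, (∀ U : E →ₗᵢ[ℝ] E, U x = x → (∀ y ∈ C, U y ∈ C) → U w = w) ∧
      (∀ y ∈ C, 0 ≤ inner ℝ w y) ∧ inner ℝ w x < 0 := by
  have hconv : Convex ℝ (C : Set E) := C.convex
  obtain ⟨p, hp, hmin⟩ :=
    exists_norm_eq_iInf_of_complete_convex ⟨0, zero_mem C⟩ C.isClosed.isComplete hconv x
  have hvar : ∀ y ∈ C, inner ℝ (x - p) (y - p) ≤ 0 :=
    (norm_eq_iInf_iff_real_inner_le_zero hconv hp).1 hmin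
  have horth : inner ℝ (x - p) p = 0 := by
    have hle := hvar (p + p) (add_mem hp hp)
    have hge := hvar 0 (zero_mem C)
    rw [add_sub_cancel_right] at hle
    rw [zero_sub, inner_neg_right] at hge
    linarith
  refine ⟨p - x, fun U hUx hUC => ?_, fun y hy => ?_, ?_⟩
  · rw [map_sub, hUx, linearIsometry_fixes_of_inner_nonpos U hUx (hvar _ (hUC p hp))]
  · have := hvar y hy
    rw [inner_sub_right, horth] at this
    rw [← neg_sub, inner_neg_left]
    linarith
  · have hne : x - p ≠ 0 := fun h => hx (sub_eq_zero.1 h ▸ hp)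
    have hself : inner ℝ (x - p) x = ‖x - p‖ ^ 2 := by
      rw [← real_inner_self_eq_norm_sq, inner_sub_right _ x p, horth, sub_zero]
    rw [← neg_sub, inner_neg_left, hself, neg_lt_zero]
    positivity

end ConvexGeometry

section SchmidtRank

open scoped Kronecker

variable {K : Type*} [Field K] {l m n o : Type*} [Fintype n] [Fintype o]

/-- The Schmidt rank of a bipartite vector `ξ ∈ K^m ⊗ K^n`: the rank of its coefficient matrix. -/
def schmidtRank (ξ : m × n → K) : ℕ :=
  (Matrix.of fun a b => ξ (a, b)).rank

theorem schmidtRank_zero : schmidtRank (0 : m × n → K) = 0 :=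
  rank_zero

theorem schmidtRank_le_card_fst [Fintype m] (ξ : m × n → K) : schmidtRank ξ ≤ Fintype.card m :=
  rank_le_card_height _

theorem schmidtRank_single_le_one [DecidableEq m] [DecidableEq n] (x : m × n) :
    schmidtRank (Pi.single x 1 : m × n → K) ≤ 1 := by
  have : (Matrix.of fun a b => (Pi.single x 1 : m × n → K) (a, b)) =
      vecMulVec (Pi.single x.1 1) (Pi.single x.2 1) := by
    ext a b
    simp only [of_apply, vecMulVec_apply, Pi.single_apply, Prod.ext_iff, ite_and, ite_mul, one_mul,
      zero_mul]
  rw [schmidtRank, this]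
  exact rank_vecMulVec_le _ _

theorem schmidtRank_kronecker_mulVec_le [Fintype m] (A : Matrix l m K) (B : Matrix o n K)
    (ξ : m × n → K) : schmidtRank ((A ⊗ₖ B) *ᵥ ξ) ≤ schmidtRank ξ := by
  set X : Matrix m n K := Matrix.of fun a b => ξ (a, b)
  have hcoeff : (Matrix.of fun a b => ((A ⊗ₖ B) *ᵥ ξ) (a, b)) = A * X * Bᵀ := by
    have h := kronecker_mulVec_vec B Xᵀ A
    ext a b
    rw [← transpose_apply (A * X * Bᵀ), transpose_mul, transpose_mul, transpose_transpose,
      ← Matrix.mul_assoc]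
    exact congrFun h (a, b)
  rw [schmidtRank, hcoeff]
  exact (rank_mul_le_left _ _).trans (rank_mul_le_right _ _)

theorem schmidtRank_smul_le [Finite m] (c : K) (ξ : m × n → K) :
    schmidtRank (c • ξ) ≤ schmidtRank ξ := by
  classical
  have := Fintype.ofFinite m
  simpa [smul_kronecker, smul_mulVec] using
    schmidtRank_kronecker_mulVec_le (c • (1 : Matrix m m K)) (1 : Matrix n n K) ξ

theorem exists_eq_mul_of_rank_le {k : ℕ} {M : Matrix m n K} (h : M.rank ≤ k) :
    ∃ (A : Matrix m (Fin k) K) (B : Matrix (Fin k) n K), M = A * B := by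
  classical
  have hle : Module.finrank K (LinearMap.range M.toLin') ≤ Module.finrank K (Fin k → K) := by
    rwa [Module.finrank_fin_fun]
  obtain ⟨f, hf⟩ := finrank_le_iff_exists_linearMap.1 hle
  obtain ⟨g, hg⟩ := f.exists_leftInverse_of_injective (LinearMap.ker_eq_bot.2 hf)
  refine ⟨LinearMap.toMatrix' ((LinearMap.range M.toLin').subtype ∘ₗ g),
    LinearMap.toMatrix' (f ∘ₗ M.toLin'.rangeRestrict), ?_⟩
  rw [← LinearMap.toMatrix'_comp, LinearMap.comp_assoc, ← LinearMap.comp_assoc _ f g, hg,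
    LinearMap.id_comp]
  exact (LinearMap.toMatrix'_toLin' M).symm

theorem exists_eq_kronecker_one_mulVec [DecidableEq n] {k : ℕ} {ξ : m × n → K}
    (h : schmidtRank ξ ≤ k) :
    ∃ (A : Matrix m (Fin k) K) (η : Fin k × n → K), ξ = (A ⊗ₖ (1 : Matrix n n K)) *ᵥ η := by
  obtain ⟨A, B, hAB⟩ := exists_eq_mul_of_rank_le h
  refine ⟨A, fun x => B x.1 x.2, funext fun ⟨a, b⟩ => ?_⟩
  have := congrFun₂ hAB a b
  simpa [mulVec, dotProduct, Fintype.sum_prod_type, Matrix.mul_apply, one_apply] using this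

theorem isClosed_setOf_schmidtRank_le [Finite m] (k : ℕ) :
    IsClosed {ξ : m × n → ℂ | schmidtRank ξ ≤ k} := by
  classical
  have := Fintype.ofFinite m
  let T : (m × n → ℂ) →ₗ[ℂ] ((n → ℂ) →L[ℂ] (m → ℂ)) :=
    LinearMap.toContinuousLinearMap.toLinearMap ∘ₗ (toLin' (m := m) (n := n)).toLinearMap ∘ₗ
      (LinearEquiv.curry ℂ ℂ m n ≪≫ₗ Matrix.ofLinearEquiv ℂ).toLinearMap
  have hT : Continuous T := T.continuous_of_finiteDimensional
  have hrank : ∀ ξ, (T ξ : (n → ℂ) →ₗ[ℂ] m → ℂ).rank = schmidtRank ξ := fun ξ =>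
    (Module.finrank_eq_rank ℂ _).symm
  convert ((isOpen_setOfPred_nat_le_rank (𝕜 := ℂ) (k + 1)).preimage hT).isClosed_compl using 1
  ext ξ
  simp only [Set.mem_ofPred_eq, Set.mem_compl_iff, Set.mem_preimage, hrank, Nat.cast_le, not_le,
    Nat.lt_succ_iff]

end SchmidtRank

section Frobenius

open scoped Matrix.Norms.Frobenius

variable {m n : Type*} [Fintype m] [Fintype n]

/-- The real Hilbert space structure `⟪X, Y⟫ = Re Tr(Xᴴ Y)` underlying the Frobenius norm. -/
@[reducible]
def frobeniusInnerProductSpace : InnerProductSpace ℝ (Matrix m n ℂ) where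
  inner X Y := (Xᴴ * Y).trace.re
  norm_sq_eq_re_inner X := by
    rw [frobenius_norm_def, ← Real.sqrt_eq_rpow, Real.sq_sqrt (by positivity), Finset.sum_comm]
    simp [trace, Matrix.mul_apply, ← Complex.normSq_eq_norm_sq, Complex.normSq_apply]
  conj_inner_symm X Y := by
    rw [conj_trivial, ← conjTranspose_conjTranspose Y, ← conjTranspose_mul, trace_conjTranspose,
      RCLike.star_def, Complex.conj_re, conjTranspose_conjTranspose]
  add_left X Y Z := by
    rw [conjTranspose_add, Matrix.add_mul, trace_add, Complex.add_re]
  smul_left X Y r := by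
    simp

attribute [local instance] frobeniusInnerProductSpace

theorem frobenius_norm_unitary_conj [DecidableEq n] {V : Matrix n n ℂ}
    (hV : V ∈ unitary (Matrix n n ℂ)) (X : Matrix n n ℂ) : ‖V * X * Vᴴ‖ = ‖X‖ := by
  have hVV : Vᴴ * V = 1 := Unitary.star_mul_self_of_mem hV
  have hsq : ‖V * X * Vᴴ‖ ^ 2 = ‖X‖ ^ 2 := by
    rw [← real_inner_self_eq_norm_sq, ← real_inner_self_eq_norm_sq]
    change ((V * X * Vᴴ)ᴴ * (V * X * Vᴴ)).trace.re = (Xᴴ * X).trace.re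
    rw [trace_mul_comm]
    simp only [conjTranspose_mul, conjTranspose_conjTranspose]
    rw [show V * X * Vᴴ * (V * (Xᴴ * Vᴴ)) = V * (X * (Vᴴ * V) * Xᴴ) * Vᴴ by noncomm_ring,
      hVV, Matrix.mul_one, trace_mul_comm, ← Matrix.mul_assoc, hVV, Matrix.one_mul, trace_mul_comm]
  exact (sq_eq_sq₀ (norm_nonneg _) (norm_nonneg _)).1 hsq

/-- Conjugation by a unitary matrix, as an isometry for the Frobenius norm. -/
def unitaryConjIsometry [DecidableEq n] {V : Matrix n n ℂ} (hV : V ∈ unitary (Matrix n n ℂ)) :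
    Matrix n n ℂ →ₗᵢ[ℝ] Matrix n n ℂ where
  toFun X := V * X * Vᴴ
  map_add' X Y := by rw [Matrix.mul_add, Matrix.add_mul]
  map_smul' r X := by simp
  norm_map' := frobenius_norm_unitary_conj hV

theorem unitary_conj_eq_iff_commute [DecidableEq n] {V X : Matrix n n ℂ}
    (hV : V ∈ unitary (Matrix n n ℂ)) :
    V * X * Vᴴ = X ↔ Commute V X := by
  constructor
  · intro h
    rw [Commute, SemiconjBy]
    nth_rw 2 [← h]
    rw [Matrix.mul_assoc, show Vᴴ * V = 1 from Unitary.star_mul_self_of_mem hV, Matrix.mul_one]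
  · intro h
    rw [h.eq, Matrix.mul_assoc, show V * Vᴴ = 1 from Unitary.mul_star_self_of_mem hV,
      Matrix.mul_one]

theorem exists_invariant_witness [DecidableEq n] (C : ProperCone ℝ (Matrix n n ℂ))
    (hC : ∀ Y ∈ C, Y.IsHermitian) {X : Matrix n n ℂ} (hX : X.IsHermitian) (hXC : X ∉ C) :
    ∃ W : Matrix n n ℂ, W.IsHermitian ∧
      (∀ V ∈ unitary (Matrix n n ℂ), Commute V X → (∀ Y ∈ C, V * Y * Vᴴ ∈ C) → Commute V W) ∧
      (∀ Y ∈ C, 0 ≤ (W * Y).trace.re) ∧ (W * X).trace.re < 0 := by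
  obtain ⟨W, hWinv, hWC, hWX⟩ := exists_invariant_separating_of_notMem C hXC
  have hW : Wᴴ = W := hWinv (starₗᵢ ℝ : Matrix n n ℂ ≃ₗᵢ⋆[ℝ] Matrix n n ℂ).toLinearIsometry hX
    fun Y hY => by
      have : star Y = Y := hC Y hY
      simpa [this] using hY
  refine ⟨W, hW, fun V hV hVX hVC => ?_, fun Y hY => ?_, ?_⟩
  · exact (unitary_conj_eq_iff_commute hV).1
      (hWinv (unitaryConjIsometry hV) ((unitary_conj_eq_iff_commute hV).2 hVX) hVC)
  · exact (congrArg (fun Z => 0 ≤ (Z * Y).trace.re) hW).mp (hWC Y hY)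
  · exact (congrArg (fun Z => (Z * X).trace.re < 0) hW).mp hWX

end Frobenius

section SchmidtCone

open scoped Kronecker

theorem trace_re_vecMulVec_star {n : Type*} [Fintype n] (ξ : n → ℂ) :
    (vecMulVec ξ (star ξ)).trace.re = ∑ x, ‖ξ x‖ ^ 2 := by
  simp [trace, vecMulVec_apply, ← Complex.normSq_eq_norm_sq, Complex.normSq_apply]

theorem vecMulVec_star_mulVec {m n : Type*} [Fintype n] (V : Matrix m n ℂ) (ξ : n → ℂ) :
    vecMulVec (V *ᵥ ξ) (star (V *ᵥ ξ)) = V * vecMulVec ξ (star ξ) * Vᴴ := by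
  rw [star_mulVec, mul_vecMulVec, vecMulVec_mul]

theorem norm_sq_le_sum_sum_norm_sq {ι n : Type*} [Fintype ι] [Fintype n] (ξ : ι → n → ℂ) :
    ‖ξ‖ ^ 2 ≤ ∑ i, ∑ x, ‖ξ i x‖ ^ 2 := by
  have hnonneg : 0 ≤ ∑ i, ∑ x, ‖ξ i x‖ ^ 2 := by positivity
  rw [← Real.le_sqrt (norm_nonneg ξ) hnonneg]
  refine (pi_norm_le_iff_of_nonneg (Real.sqrt_nonneg _)).2 fun i =>
    (pi_norm_le_iff_of_nonneg (Real.sqrt_nonneg _)).2 fun x => Real.le_sqrt_of_sq_le ?_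
  calc ‖ξ i x‖ ^ 2 ≤ ∑ x, ‖ξ i x‖ ^ 2 :=
        Finset.single_le_sum (fun x _ => sq_nonneg ‖ξ i x‖) (Finset.mem_univ x)
    _ ≤ ∑ i, ∑ x, ‖ξ i x‖ ^ 2 :=
        Finset.single_le_sum (f := fun i => ∑ x, ‖ξ i x‖ ^ 2)
          (fun i _ => by positivity) (Finset.mem_univ i)

theorem isProperMap_sum_vecMulVec_star (ι n : Type*) [Fintype ι] [Finite n] :
    IsProperMap fun ξ : ι → n → ℂ => ∑ i, vecMulVec (ξ i) (star (ξ i)) := by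
  have := Fintype.ofFinite n
  have htrace (ξ : ι → n → ℂ) :
      (∑ i, vecMulVec (ξ i) (star (ξ i))).trace.re = ∑ i, ∑ x, ‖ξ i x‖ ^ 2 := by
    simp only [trace_sum, Complex.re_sum, trace_re_vecMulVec_star]
  refine isProperMap_of_comp_of_t2 (g := fun X : Matrix n n ℂ => X.trace.re)
    (by fun_prop) (by fun_prop) ?_
  refine isProperMap_iff_tendsto_cocompact.2
    ⟨by fun_prop, Filter.Tendsto.mono_right ?_ atTop_le_cocompact⟩
  refine Filter.tendsto_atTop_mono (fun ξ => ?_)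
    ((Filter.tendsto_pow_atTop two_ne_zero).comp (tendsto_norm_cocompact_atTop (E := ι → n → ℂ)))
  simpa only [Function.comp_apply, htrace] using norm_sq_le_sum_sum_norm_sq ξ

variable {dA dB k : ℕ}

theorem vecMulVec_star_mem_schmidtSet {ξ : Fin dA × Fin dB → ℂ} (hξ : schmidtRank ξ ≤ k) :
    vecMulVec ξ (star ξ) ∈ SchmidtSet dA dB k :=
  ⟨1, fun _ => ξ, fun _ => hξ, by simp⟩

theorem add_mem_schmidtSet {X Y : Matrix (Fin dA × Fin dB) (Fin dA × Fin dB) ℂ}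
    (hX : X ∈ SchmidtSet dA dB k) (hY : Y ∈ SchmidtSet dA dB k) :
    X + Y ∈ SchmidtSet dA dB k := by
  obtain ⟨M, ξ, hξ, rfl⟩ := hX
  obtain ⟨N, η, hη, rfl⟩ := hY
  refine ⟨M + N, Fin.append ξ η, fun i => ?_, ?_⟩
  · exact Fin.addCases (fun i => by simpa using hξ i) (fun i => by simpa using hη i) i
  · simp [Fin.sum_univ_add]

theorem zero_mem_schmidtSet : 0 ∈ SchmidtSet dA dB k :=
  ⟨0, Fin.elim0, fun i => i.elim0, by simp⟩

theorem kronecker_conj_mem_schmidtSet {dA' dB' : ℕ} (A : Matrix (Fin dA') (Fin dA) ℂ)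
    (B : Matrix (Fin dB') (Fin dB) ℂ) {X : Matrix (Fin dA × Fin dB) (Fin dA × Fin dB) ℂ}
    (hX : X ∈ SchmidtSet dA dB k) : (A ⊗ₖ B) * X * (A ⊗ₖ B)ᴴ ∈ SchmidtSet dA' dB' k := by
  obtain ⟨N, ξ, hξ, rfl⟩ := hX
  refine ⟨N, fun i => (A ⊗ₖ B) *ᵥ ξ i,
    fun i => (schmidtRank_kronecker_mulVec_le A B (ξ i)).trans (hξ i), ?_⟩
  simp only [vecMulVec_star_mulVec, Matrix.mul_sum, Matrix.sum_mul]

theorem smul_vecMulVec_star {n : Type*} {t : ℝ} (ht : 0 ≤ t) (ξ : n → ℂ) :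
    t • vecMulVec ξ (star ξ) = vecMulVec ((√t : ℂ) • ξ) (star ((√t : ℂ) • ξ)) := by
  rw [star_smul, smul_vecMulVec, vecMulVec_smul, smul_smul, RCLike.star_def, Complex.conj_ofReal,
    ← Complex.ofReal_mul, Real.mul_self_sqrt ht]
  rfl

theorem smul_mem_schmidtSet {t : ℝ} (ht : 0 ≤ t) {X : Matrix (Fin dA × Fin dB) (Fin dA × Fin dB) ℂ}
    (hX : X ∈ SchmidtSet dA dB k) : t • X ∈ SchmidtSet dA dB k := by
  obtain ⟨N, ξ, hξ, rfl⟩ := hX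
  refine ⟨N, fun i => (√t : ℂ) • ξ i, fun i => (schmidtRank_smul_le _ (ξ i)).trans (hξ i), ?_⟩
  simp only [Finset.smul_sum, smul_vecMulVec_star ht]

theorem exists_finrank_succ_of_mem_schmidtSet {X : Matrix (Fin dA × Fin dB) (Fin dA × Fin dB) ℂ}
    (hX : X ∈ SchmidtSet dA dB k) :
    ∃ η : Fin (Module.finrank ℝ (Matrix (Fin dA × Fin dB) (Fin dA × Fin dB) ℂ) + 1) →
        Fin dA × Fin dB → ℂ,
      (∀ j, schmidtRank (η j) ≤ k) ∧ ∑ j, vecMulVec (η j) (star (η j)) = X := by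
  obtain ⟨N, ξ, hξ, rfl⟩ := hX
  let S := (fun η => vecMulVec η (star η)) '' {η : Fin dA × Fin dB → ℂ | schmidtRank η ≤ k}
  have zero_mem : 0 ∈ S := ⟨0, by simp [schmidtRank_zero], zero_vecMulVec _⟩
  have smul_mem : ∀ t : ℝ, 0 ≤ t → ∀ Y ∈ S, t • Y ∈ S := by
    rintro t ht _ ⟨η, hη, rfl⟩
    exact ⟨(√t : ℂ) • η, (schmidtRank_smul_le _ η).trans hη, (smul_vecMulVec_star ht η).symm⟩
  obtain ⟨Y, hY, hsum⟩ :=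
    exists_finrank_succ_sum_eq zero_mem smul_mem fun i => ⟨ξ i, hξ i, rfl⟩
  choose η hη hηY using hY
  exact ⟨η, hη, (Finset.sum_congr rfl fun j _ => hηY j).trans hsum⟩

theorem isClosed_schmidtSet : IsClosed (SchmidtSet dA dB k) := by
  set r := Module.finrank ℝ (Matrix (Fin dA × Fin dB) (Fin dA × Fin dB) ℂ) + 1
  have himage : SchmidtSet dA dB k = (fun ξ : Fin r → Fin dA × Fin dB → ℂ =>
      ∑ i, vecMulVec (ξ i) (star (ξ i))) '' ⋂ i, (fun ξ => ξ i) ⁻¹' {η | schmidtRank η ≤ k} := by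
    refine Set.Subset.antisymm (fun X hX => ?_) ?_
    · obtain ⟨η, hη, hsum⟩ := exists_finrank_succ_of_mem_schmidtSet hX
      exact ⟨η, Set.mem_iInter.2 hη, hsum⟩
    · rintro _ ⟨ξ, hξ, rfl⟩
      exact ⟨r, ξ, fun i => Set.mem_iInter.1 hξ i, rfl⟩
  rw [himage]
  exact (isProperMap_sum_vecMulVec_star _ _).isClosedMap _
    (isClosed_iInter fun i => (isClosed_setOf_schmidtRank_le k).preimage (continuous_apply i))

/-- `Sch_k` as a closed convex cone. -/
def schmidtCone (dA dB k : ℕ) : ProperCone ℝ (Matrix (Fin dA × Fin dB) (Fin dA × Fin dB) ℂ) where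
  carrier := SchmidtSet dA dB k
  add_mem' := add_mem_schmidtSet
  zero_mem' := zero_mem_schmidtSet
  smul_mem' t _ hX := smul_mem_schmidtSet t.2 hX
  isClosed' := isClosed_schmidtSet

theorem posSemidef_of_mem_schmidtSet {X : Matrix (Fin dA × Fin dB) (Fin dA × Fin dB) ℂ}
    (hX : X ∈ SchmidtSet dA dB k) : X.PosSemidef := by
  obtain ⟨N, ξ, -, rfl⟩ := hX
  exact posSemidef_sum _ fun i _ => posSemidef_vecMulVec_self_star (ξ i)

theorem one_mem_schmidtSet (hk : 1 ≤ k) : 1 ∈ SchmidtSet dA dB k := by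
  have hsum : (1 : Matrix (Fin dA × Fin dB) (Fin dA × Fin dB) ℂ) =
      ∑ x, vecMulVec (Pi.single x 1) (star (Pi.single x 1)) := by
    ext x y
    simp [Matrix.sum_apply, vecMulVec_apply, Pi.single_apply, one_apply]
  rw [hsum]
  exact sum_mem (S := schmidtCone dA dB k) fun x _ =>
    vecMulVec_star_mem_schmidtSet ((schmidtRank_single_le_one x).trans hk)

end SchmidtCone

section Choi

open scoped Kronecker

theorem trace_mul_vecMulVec_star {n : Type*} [Fintype n] (W : Matrix n n ℂ) (ξ : n → ℂ) :
    (W * vecMulVec ξ (star ξ)).trace = star ξ ⬝ᵥ W *ᵥ ξ := by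
  rw [mul_vecMulVec, trace_vecMulVec, dotProduct_comm]

theorem posSemidef_of_dotProduct_mulVec_nonneg {n : Type*} [Fintype n]
    {W : Matrix n n ℂ} (hW : ∀ ξ, 0 ≤ star ξ ⬝ᵥ W *ᵥ ξ) : W.PosSemidef := by
  classical
  rw [← isPositive_toEuclideanLin_iff, LinearMap.isPositive_iff_complex]
  intro x
  have h : 0 ≤ inner ℂ (W.toEuclideanLin x) x := by
    rw [← inner_conj_symm, ← RCLike.star_def, star_nonneg_iff,
      EuclideanSpace.inner_eq_star_dotProduct, dotProduct_comm]
    exact hW x.ofLp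
  exact ⟨(Complex.eq_re_of_ofReal_le h).symm, (Complex.nonneg_iff.1 h).1⟩

variable {k m n : ℕ}

/-- The Choi matrix `∑ |a⟩⟨b| ⊗ L(|a⟩⟨b|)` of a map `L`. -/
def choiMatrix (L : Matrix (Fin m) (Fin m) ℂ →ₗ[ℂ] Matrix (Fin n) (Fin n) ℂ) :
    Matrix (Fin m × Fin n) (Fin m × Fin n) ℂ :=
  Matrix.of fun x y => L (single x.1 y.1 1) x.2 y.2

variable (L : Matrix (Fin m) (Fin m) ℂ →ₗ[ℂ] Matrix (Fin n) (Fin n) ℂ)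

theorem idTensor_apply_eq_sum (X : Matrix (Fin k × Fin m) (Fin k × Fin m) ℂ)
    (x y : Fin k × Fin n) :
    idTensor L X x y =
      ∑ a, ∑ b, X (x.1, a) (y.1, b) * choiMatrix L (a, x.2) (b, y.2) := by
  have hbasis : (of fun a b => X (x.1, a) (y.1, b)) =
      ∑ a, ∑ b, X (x.1, a) (y.1, b) • single a b (1 : ℂ) := by
    simpa only [smul_single, smul_eq_mul, mul_one, of_apply] using
      matrix_eq_sum_single (of fun a b => X (x.1, a) (y.1, b))
  simp only [idTensor, of_apply, hbasis, map_sum, map_smul, Matrix.sum_apply, Matrix.smul_apply,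
    smul_eq_mul, choiMatrix]

theorem idTensor_sum {ι : Type*} (s : Finset ι)
    (X : ι → Matrix (Fin k × Fin m) (Fin k × Fin m) ℂ) :
    idTensor L (∑ i ∈ s, X i) = ∑ i ∈ s, idTensor L (X i) := by
  ext x y
  simp only [idTensor_apply_eq_sum, Matrix.sum_apply, Finset.sum_mul]
  simp only [Finset.sum_comm (t := s)]

theorem idTensor_vecMulVec_star_vec (A : Matrix (Fin m) (Fin k) ℂ) :
    idTensor L (vecMulVec (star (vec A)) (vec A)) =
      (A ⊗ₖ (1 : Matrix (Fin n) (Fin n) ℂ))ᴴ * choiMatrix L *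
        (A ⊗ₖ (1 : Matrix (Fin n) (Fin n) ℂ)) := by
  ext ⟨s, i⟩ ⟨t, j⟩
  rw [idTensor_apply_eq_sum]
  simp only [Matrix.mul_apply, conjTranspose_apply, kroneckerMap_apply, Fintype.sum_prod_type,
    one_apply, mul_ite, mul_one, mul_zero, apply_ite star, star_zero, ite_mul, zero_mul,
    Finset.sum_ite_eq', Finset.mem_univ, if_true, vecMulVec_apply, Finset.sum_mul,
    Pi.star_apply, vec]
  rw [Finset.sum_comm]
  exact Finset.sum_congr rfl fun _ _ => Finset.sum_congr rfl fun _ _ => by ring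

theorem dotProduct_idTensor_vecMulVec_mulVec (A : Matrix (Fin m) (Fin k) ℂ)
    (η : Fin k × Fin n → ℂ) :
    star η ⬝ᵥ idTensor L (vecMulVec (star (vec A)) (vec A)) *ᵥ η =
      star ((A ⊗ₖ (1 : Matrix (Fin n) (Fin n) ℂ)) *ᵥ η) ⬝ᵥ choiMatrix L *ᵥ (A ⊗ₖ 1) *ᵥ η := by
  rw [idTensor_vecMulVec_star_vec, star_mulVec, ← dotProduct_mulVec, mulVec_mulVec, mulVec_mulVec]

theorem isKPositive_iff_forall_schmidtRank_le :
    IsKPositive k L ↔ ∀ ξ, schmidtRank ξ ≤ k → 0 ≤ star ξ ⬝ᵥ choiMatrix L *ᵥ ξ := by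
  constructor
  · intro hL ξ hξ
    obtain ⟨A, η, rfl⟩ := exists_eq_kronecker_one_mulVec hξ
    rw [← dotProduct_idTensor_vecMulVec_mulVec]
    exact (hL _ (posSemidef_vecMulVec_star_self (vec A))).dotProduct_mulVec_nonneg η
  · intro h X hX
    obtain ⟨N, v, rfl⟩ := posSemidef_iff_eq_sum_vecMulVec.1 hX
    rw [idTensor_sum]
    refine posSemidef_sum _ fun i _ => posSemidef_of_dotProduct_mulVec_nonneg fun η => ?_
    obtain ⟨A, hA⟩ := vec_bijective.surjective (star (v i))
    have hrank : schmidtRank ((A ⊗ₖ (1 : Matrix (Fin n) (Fin n) ℂ)) *ᵥ η) ≤ k :=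
      (schmidtRank_kronecker_mulVec_le _ _ _).trans
        ((schmidtRank_le_card_fst η).trans_eq (Fintype.card_fin k))
    rw [← hA, ← star_star (v i), ← hA, dotProduct_idTensor_vecMulVec_mulVec]
    exact h _ hrank

theorem isKPositive_iff_forall_mem_schmidtSet :
    IsKPositive k L ↔ ∀ X ∈ SchmidtSet m n k, 0 ≤ (choiMatrix L * X).trace := by
  rw [isKPositive_iff_forall_schmidtRank_le]
  constructor
  · rintro h _ ⟨N, ξ, hξ, rfl⟩
    rw [Matrix.mul_sum, trace_sum]
    exact Finset.sum_nonneg fun i _ => (h _ (hξ i)).trans_eq (trace_mul_vecMulVec_star _ _).symm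
  · intro h ξ hξ
    exact (h _ (vecMulVec_star_mem_schmidtSet hξ)).trans_eq (trace_mul_vecMulVec_star _ _)

end Choi

section BrauerOperator

variable {d : ℕ}

theorem flipMatrix_eq_permMatrix :
    flipMatrix d = Equiv.Perm.permMatrix ℂ (Equiv.prodComm (Fin d) (Fin d)) := by
  ext ⟨i, j⟩ ⟨k, l⟩
  simp only [flipMatrix, of_apply, Equiv.Perm.permMatrix, PEquiv.toMatrix_apply,
    Equiv.toPEquiv_apply, Option.mem_some_iff, Equiv.prodComm_apply, Prod.swap_prod_mk,
    Prod.mk.injEq, and_comm]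

theorem flipMatrix_mul_self : flipMatrix d * flipMatrix d = 1 := by
  rw [flipMatrix_eq_permMatrix, ← permMatrix_mul, ← permMatrix_one]
  rfl

theorem flipMatrix_mulVec_vec_one : flipMatrix d *ᵥ vec 1 = vec 1 := by
  rw [flipMatrix_eq_permMatrix, permMatrix_mulVec]
  exact (vec_transpose (1 : Matrix (Fin d) (Fin d) ℂ)).symm.trans (by rw [transpose_one])

theorem vec_one_vecMul_flipMatrix : vec 1 ᵥ* flipMatrix d = vec 1 := by
  rw [flipMatrix_eq_permMatrix, vecMul_permMatrix]
  exact (vec_transpose (1 : Matrix (Fin d) (Fin d) ℂ)).symm.trans (by rw [transpose_one])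

theorem trace_flipMatrix : (flipMatrix d).trace = d := by
  simp only [trace, diag_apply, flipMatrix, of_apply, Fintype.sum_prod_type, ite_and,
    Finset.sum_ite_eq, Finset.mem_univ, if_true, Finset.sum_const, Finset.card_univ,
    Fintype.card_fin, nsmul_one]

theorem vec_one_dotProduct_vec_one :
    vec (1 : Matrix (Fin d) (Fin d) ℂ) ⬝ᵥ vec 1 = d := by
  rw [vec_dotProduct_vec, transpose_one, Matrix.one_mul, trace_one, Fintype.card_fin]

/-- The element `α I + β d |Ω_d⟩⟨Ω_d| + γ F_d` of the Brauer algebra on two strands. The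
middle term is written with the unnormalised vector `vec 1 = √d |Ω_d⟩`. -/
def brauerOperator (d : ℕ) (α β γ : ℂ) : Matrix (Fin d × Fin d) (Fin d × Fin d) ℂ :=
  α • 1 + β • vecMulVec (vec 1) (vec 1) + γ • flipMatrix d

theorem brauerOperator_apply (α β γ : ℂ) (i j k l : Fin d) :
    brauerOperator d α β γ (i, j) (k, l) =
      (if i = k ∧ j = l then α else 0) + (if i = j ∧ k = l then β else 0) +
        if i = l ∧ j = k then γ else 0 := by
  simp only [brauerOperator, flipMatrix, Matrix.add_apply, Matrix.smul_apply, one_apply, of_apply,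
    vecMulVec_apply, vec, Prod.mk.injEq, smul_eq_mul, mul_ite, mul_one, mul_zero, ← ite_and,
    eq_comm (a := j) (b := i), eq_comm (a := l) (b := k), and_comm (a := k = l)]

theorem star_vec_one : star (vec (1 : Matrix (Fin d) (Fin d) ℂ)) = vec 1 := by
  rw [star_vec, Matrix.map_one _ (star_zero _) (star_one _)]

theorem conjTranspose_brauerOperator (α β γ : ℂ) :
    (brauerOperator d α β γ)ᴴ = brauerOperator d (star α) (star β) (star γ) := by
  have hflip : (flipMatrix d)ᴴ = flipMatrix d := by
    rw [flipMatrix_eq_permMatrix, conjTranspose_permMatrix]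
    rfl
  simp only [brauerOperator, conjTranspose_add, conjTranspose_smul, conjTranspose_one,
    conjTranspose_vecMulVec, star_vec_one, hflip]

theorem brauerOperator_add_smul_one (α β γ ε : ℂ) :
    brauerOperator d α β γ + ε • 1 = brauerOperator d (α + ε) β γ := by
  simp only [brauerOperator]
  module

theorem smul_brauerOperator (c α β γ : ℂ) :
    c • brauerOperator d α β γ = brauerOperator d (c * α) (c * β) (c * γ) := by
  simp only [brauerOperator, smul_add, smul_smul]

theorem rho_eq_brauerOperator (a b : ℝ) :
    rho d a b = brauerOperator d ((1 - a - b) / d ^ 2 : ℝ) (a / d : ℝ) (b / d : ℝ) := by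
  have homega : omegaVec d = ((1 / √d : ℝ) : ℂ) • vec 1 := by
    ext ⟨i, j⟩
    simp only [omegaVec, Pi.smul_apply, vec, one_apply, smul_eq_mul, mul_ite, mul_one, mul_zero,
      eq_comm]
  have hsq : ((1 / √d : ℝ) : ℂ) * ((1 / √d : ℝ) : ℂ) = 1 / d := by
    rw [← Complex.ofReal_mul, div_mul_div_comm, Real.mul_self_sqrt d.cast_nonneg]
    push_cast
    rw [one_mul]
  rw [rho, homega, star_smul, star_vec_one, RCLike.star_def, Complex.conj_ofReal, vecMulVec_smul,
    smul_vecMulVec, smul_smul, smul_smul, mul_assoc, hsq, mul_one_div, brauerOperator]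
  push_cast
  rfl

theorem trace_brauerOperator (α β γ : ℂ) :
    (brauerOperator d α β γ).trace = α * d ^ 2 + β * d + γ * d := by
  simp only [brauerOperator, trace_add, trace_smul, trace_one, trace_vecMulVec,
    vec_one_dotProduct_vec_one, trace_flipMatrix, Fintype.card_prod, Fintype.card_fin, smul_eq_mul,
    Nat.cast_mul, pow_two]

theorem trace_brauerOperator_mul_brauerOperator (α β γ α' β' γ' : ℂ) :
    (brauerOperator d α β γ * brauerOperator d α' β' γ').trace =
      d ^ 2 * (α * α' + β * β' + γ * γ') +
        d * (α * (β' + γ') + β * (α' + γ') + γ * (α' + β')) := by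
  simp only [brauerOperator, Matrix.add_mul, Matrix.mul_add, Matrix.smul_mul, Matrix.mul_smul,
    Matrix.one_mul, Matrix.mul_one, vecMulVec_mul_vecMulVec]
  simp only [mul_vecMulVec, vecMulVec_mul, vecMulVec_smul, flipMatrix_mul_self,
    flipMatrix_mulVec_vec_one, vec_one_vecMul_flipMatrix, trace_add, trace_smul, trace_one,
    trace_vecMulVec, vec_one_dotProduct_vec_one, trace_flipMatrix,
    Fintype.card_prod, Fintype.card_fin, smul_eq_mul, Nat.cast_mul]
  ring

theorem choiMatrix_lmap (p q : ℝ) :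
    choiMatrix (Lmap d p q) = brauerOperator d ((1 - p - q) / d : ℝ) p q := by
  ext ⟨i, j⟩ ⟨k, l⟩
  have htrace : (single i k (1 : ℂ)).trace = if i = k then 1 else 0 := by
    split_ifs with h
    · rw [h, trace_single_eq_same]
    · exact trace_single_eq_of_ne _ _ _ h
  change ((1 - p - q : ℝ) : ℂ) / d * ((single i k (1 : ℂ)).trace * (1 : Matrix _ _ ℂ) j l) +
    p * single i k (1 : ℂ) j l + q * single i k (1 : ℂ) l j = _
  rw [brauerOperator_apply, htrace]
  simp only [one_apply, single_apply, mul_ite, mul_one, mul_zero, ← ite_and]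
  push_cast
  simp only [eq_comm (a := k) (b := j), and_comm (a := j = l)]

end BrauerOperator

section OrthogonalInvariance

open scoped Kronecker

variable {d : ℕ} {W : Matrix (Fin d × Fin d) (Fin d × Fin d) ℂ}

/-- The operator `O ⊗ O` on `ℂ^d ⊗ ℂ^d` attached to a real matrix `O`. -/
def realTensorSquare (O : Matrix (Fin d) (Fin d) ℝ) : Matrix (Fin d × Fin d) (Fin d × Fin d) ℂ :=
  O.map Complex.ofRealHom ⊗ₖ O.map Complex.ofRealHom

/-- `W` is orthogonally invariant: it commutes with `O ⊗ O` for all real orthogonal `O`. -/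
def IsOrthogonallyInvariant (W : Matrix (Fin d × Fin d) (Fin d × Fin d) ℂ) : Prop :=
  ∀ O ∈ orthogonalGroup (Fin d) ℝ, Commute (realTensorSquare O) W

theorem realTensorSquare_apply (O : Matrix (Fin d) (Fin d) ℝ) (x y : Fin d × Fin d) :
    realTensorSquare O x y = ↑(O x.1 y.1 * O x.2 y.2) := by
  simp [realTensorSquare, kroneckerMap_apply]

theorem realTensorSquare_mem_unitary {O : Matrix (Fin d) (Fin d) ℝ}
    (hO : O ∈ orthogonalGroup (Fin d) ℝ) :
    realTensorSquare O ∈ unitary (Matrix (Fin d × Fin d) (Fin d × Fin d) ℂ) := by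
  have hmap : O.map Complex.ofRealHom ∈ unitaryGroup (Fin d) ℂ := by
    rw [mem_unitaryGroup_iff, star_eq_conjTranspose]
    have : (O.map Complex.ofRealHom)ᴴ = Oᵀ.map Complex.ofRealHom := by
      ext i j
      exact Complex.conj_ofReal _
    rw [this, ← Matrix.map_mul, (mem_orthogonalGroup_iff _ _).1 hO,
      Matrix.map_one _ (map_zero _) (map_one _)]
  exact kronecker_mem_unitary hmap hmap

theorem commute_flipMatrix_kronecker_self (A : Matrix (Fin d) (Fin d) ℂ) :
    Commute (A ⊗ₖ A) (flipMatrix d) := by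
  ext x y
  rw [flipMatrix_eq_permMatrix, PEquiv.mul_toMatrix_toPEquiv, PEquiv.toMatrix_toPEquiv_mul]
  exact mul_comm _ _

theorem isOrthogonallyInvariant_brauerOperator (α β γ : ℂ) :
    IsOrthogonallyInvariant (brauerOperator d α β γ) := by
  intro O hO
  have hOt : O * Oᵀ = 1 := (mem_orthogonalGroup_iff _ _).1 hO
  have hOt' : Oᵀ * O = 1 := (mem_orthogonalGroup_iff' _ _).1 hO
  have hl : realTensorSquare O *ᵥ vec 1 = vec 1 := by
    rw [realTensorSquare, kronecker_mulVec_vec, Matrix.mul_one, ← transpose_map, ← Matrix.map_mul,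
      hOt, Matrix.map_one _ (map_zero _) (map_one _)]
  have hr : vec 1 ᵥ* realTensorSquare O = vec 1 := by
    rw [realTensorSquare, vec_vecMul_kronecker, Matrix.mul_one, ← transpose_map, ← Matrix.map_mul,
      hOt', Matrix.map_one _ (map_zero _) (map_one _)]
  have hP : Commute (realTensorSquare O) (vecMulVec (vec 1) (vec 1)) := by
    rw [Commute, SemiconjBy, mul_vecMulVec, hl, vecMulVec_mul, hr]
  exact (((Commute.one_right _).smul_right α).add_right (hP.smul_right β)).add_right
    ((commute_flipMatrix_kronecker_self _).smul_right γ)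

namespace IsOrthogonallyInvariant

theorem apply_perm (hW : IsOrthogonallyInvariant W) (σ : Equiv.Perm (Fin d)) (i j k l : Fin d) :
    W (σ i, σ j) (σ k, σ l) = W (i, j) (k, l) := by
  have hσ : σ.permMatrix ℝ ∈ orthogonalGroup (Fin d) ℝ := by
    rw [mem_orthogonalGroup_iff, transpose_permMatrix, ← permMatrix_mul,
      inv_mul_cancel, permMatrix_one]
  have htensor : realTensorSquare (σ.permMatrix ℝ) =
      Equiv.Perm.permMatrix ℂ (Equiv.prodCongr σ σ) := by
    ext x y
    simp only [realTensorSquare_apply, PEquiv.toMatrix_apply, Equiv.toPEquiv_apply,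
      Option.mem_some_iff, Equiv.prodCongr_apply, Prod.ext_iff, Prod.map_fst, Prod.map_snd, ite_and]
    split_ifs <;> norm_num
  have h := (hW _ hσ).eq
  rw [htensor, PEquiv.mul_toMatrix_toPEquiv, PEquiv.toMatrix_toPEquiv_mul] at h
  simpa using congr_fun₂ h (i, j) (σ k, σ l)

theorem sign_mul_apply (hW : IsOrthogonallyInvariant W) {s : Fin d → ℝ} (hs : ∀ i, s i * s i = 1)
    (i j k l : Fin d) : (s i * s j * s k * s l : ℝ) * W (i, j) (k, l) = W (i, j) (k, l) := by
  have hdiag : diagonal s ∈ orthogonalGroup (Fin d) ℝ := by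
    rw [mem_orthogonalGroup_iff, diagonal_transpose, diagonal_mul_diagonal]
    simp [hs]
  have htensor : realTensorSquare (diagonal s) =
      diagonal fun x => ((s x.1 * s x.2 : ℝ) : ℂ) := by
    ext x y
    simp only [realTensorSquare_apply, diagonal_apply, Prod.ext_iff, ite_and]
    split_ifs <;> norm_num
  have h := congr_fun₂ (hW _ hdiag).eq (i, j) (k, l)
  rw [htensor, diagonal_mul, mul_diagonal] at h
  have hk : (s k * s l : ℝ) * (s k * s l : ℝ) = 1 := by linear_combination s l * s l * hs k + hs l
  have hk' : ((s k * s l : ℝ) : ℂ) * (s k * s l : ℝ) = 1 := by exact_mod_cast hk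
  push_cast at h hk' ⊢
  linear_combination (s k * s l : ℂ) * h + W (i, j) (k, l) * hk'

/- Otherwise some index occurs an odd number of times among `i, j, k, l`, and flipping the sign of
that coordinate negates the entry. -/
theorem apply_eq_zero (hW : IsOrthogonallyInvariant W) {i j k l : Fin d}
    (h₁ : ¬(i = k ∧ j = l)) (h₂ : ¬(i = j ∧ k = l)) (h₃ : ¬(i = l ∧ j = k)) :
    W (i, j) (k, l) = 0 := by
  let s : Fin d → Fin d → ℝ := fun m a => if a = m then -1 else 1
  have hs : ∀ m a, s m a * s m a = 1 := fun m a => by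
    simp only [s]
    split_ifs <;> norm_num
  obtain ⟨m, hm⟩ : ∃ m, s m i * s m j * s m k * s m l = -1 := by
    by_contra! hne
    have hi := hne i
    have hj := hne j
    have hk := hne k
    simp only [s] at hi hj hk
    grind
  have h := hW.sign_mul_apply (hs m) i j k l
  rw [hm] at h
  push_cast at h
  linear_combination (-1 / 2 : ℂ) * h

end IsOrthogonallyInvariant

/- The reflection in the hyperplane orthogonal to `v = e_x + 2 e_y`. -/
theorem exists_mem_orthogonalGroup_apply_ne_zero {n : Type*} [Fintype n] [DecidableEq n] {x y : n}
    (hxy : x ≠ y) : ∃ O ∈ orthogonalGroup n ℝ, O x x ≠ 0 ∧ O x y ≠ 0 := by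
  let v : n → ℝ := Pi.single x 1 + Pi.single y 2
  have hv : v ⬝ᵥ v = 5 := by
    norm_num [v, hxy, hxy.symm]
  refine ⟨1 - (2 / 5 : ℝ) • vecMulVec v v, ?_, ?_, ?_⟩
  · rw [mem_orthogonalGroup_iff, transpose_sub, transpose_one, transpose_smul, transpose_vecMulVec,
      Matrix.sub_mul, Matrix.one_mul, Matrix.mul_sub, Matrix.mul_one, Matrix.smul_mul,
      Matrix.mul_smul, vecMulVec_mul_vecMulVec, hv, vecMulVec_smul, smul_smul, smul_smul]
    module
  · norm_num [v, vecMulVec_apply, hxy]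
  · simp [v, vecMulVec_apply, hxy, hxy.symm]

namespace IsOrthogonallyInvariant

theorem eq_zero_of_diagonal (hd : 2 ≤ d) {κ : ℂ}
    (h : IsOrthogonallyInvariant (diagonal fun x : Fin d × Fin d => if x.1 = x.2 then κ else 0)) :
    κ = 0 := by
  obtain ⟨x, y, hxy⟩ : ∃ x y : Fin d, x ≠ y := by
    have := Fin.nontrivial_iff_two_le.2 hd
    exact exists_pair_ne (Fin d)
  obtain ⟨O, hO, hxx, hxy'⟩ := exists_mem_orthogonalGroup_apply_ne_zero hxy
  have hentry := congr_fun₂ (h O hO).eq (x, x) (x, y)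
  rw [mul_diagonal, diagonal_mul, realTensorSquare_apply, if_neg hxy, if_pos rfl,
    mul_zero] at hentry
  exact (mul_eq_zero.1 hentry.symm).resolve_right
    (Complex.ofReal_ne_zero.2 (mul_ne_zero hxx hxy'))

theorem exists_eq_brauerOperator_add_diagonal (hd : 2 ≤ d) (hW : IsOrthogonallyInvariant W) :
    ∃ α β γ κ : ℂ, W = brauerOperator d α β γ +
      diagonal fun x : Fin d × Fin d => if x.1 = x.2 then κ else 0 := by
  have : Nontrivial (Fin d) := Fin.nontrivial_iff_two_le.2 hd
  obtain ⟨x, y, hxy⟩ := exists_pair_ne (Fin d)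
  have htrans {i j : Fin d} (hij : i ≠ j) : ∃ σ : Equiv.Perm (Fin d), σ x = i ∧ σ y = j :=
    MulAction.is_two_pretransitive_iff.1 (Equiv.Perm.isMultiplyPretransitive (Fin d) 2) hxy hij
  have hα {i j : Fin d} (hij : i ≠ j) : W (i, j) (i, j) = W (x, y) (x, y) := by
    obtain ⟨σ, rfl, rfl⟩ := htrans hij
    exact hW.apply_perm σ x y x y
  have hβ {i j : Fin d} (hij : i ≠ j) : W (i, i) (j, j) = W (x, x) (y, y) := by
    obtain ⟨σ, rfl, rfl⟩ := htrans hij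
    exact hW.apply_perm σ x x y y
  have hγ {i j : Fin d} (hij : i ≠ j) : W (i, j) (j, i) = W (x, y) (y, x) := by
    obtain ⟨σ, rfl, rfl⟩ := htrans hij
    exact hW.apply_perm σ x y y x
  have hdiag (i : Fin d) : W (i, i) (i, i) = W (x, x) (x, x) := by
    simpa only [Equiv.swap_apply_left] using hW.apply_perm (Equiv.swap x i) x x x x
  refine ⟨W (x, y) (x, y), W (x, x) (y, y), W (x, y) (y, x),
    W (x, x) (x, x) - (W (x, y) (x, y) + W (x, x) (y, y) + W (x, y) (y, x)), ?_⟩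
  ext ⟨i, j⟩ ⟨k, l⟩
  rw [Matrix.add_apply, brauerOperator_apply, diagonal_apply]
  have h0 := @hW.apply_eq_zero _ _ i j k l
  grind

theorem exists_eq_brauerOperator (hd : 2 ≤ d) (hW : IsOrthogonallyInvariant W) :
    ∃ α β γ : ℂ, W = brauerOperator d α β γ := by
  obtain ⟨α, β, γ, κ, rfl⟩ := hW.exists_eq_brauerOperator_add_diagonal hd
  have hdiag : IsOrthogonallyInvariant
      (diagonal fun x : Fin d × Fin d => if x.1 = x.2 then κ else 0) := fun O hO => by
    simpa only [add_sub_cancel_left] using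
      (hW O hO).sub_right (isOrthogonallyInvariant_brauerOperator α β γ O hO)
  obtain rfl := eq_zero_of_diagonal hd hdiag
  exact ⟨α, β, γ, by simp only [ite_self, diagonal_zero, add_zero]⟩

end IsOrthogonallyInvariant

theorem exists_real_eq_brauerOperator (hd : 2 ≤ d) (hW : W.IsHermitian)
    (hinv : IsOrthogonallyInvariant W) : ∃ α β γ : ℝ, W = brauerOperator d α β γ := by
  obtain ⟨α, β, γ, rfl⟩ := hinv.exists_eq_brauerOperator hd
  refine ⟨α.re, β.re, γ.re, ?_⟩
  have hstar : brauerOperator d α β γ = brauerOperator d (star α) (star β) (star γ) := by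
    rw [← conjTranspose_brauerOperator, hW.eq]
  have hre (z : ℂ) : (z.re : ℂ) = (1 / 2 : ℂ) * (z + star z) := by
    rw [RCLike.star_def, Complex.add_conj]
    push_cast
    ring
  calc brauerOperator d α β γ
      = (1 / 2 : ℂ) • (brauerOperator d α β γ + brauerOperator d (star α) (star β) (star γ)) := by
        rw [← hstar]
        module
    _ = brauerOperator d α.re β.re γ.re := by
        simp only [brauerOperator, hre]
        module

end OrthogonalInvariance

section Duality

variable {d k : ℕ} {a b : ℝ}

theorem isHermitian_brauerOperator (α β γ : ℝ) : (brauerOperator d α β γ).IsHermitian := by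
  simp only [IsHermitian, conjTranspose_brauerOperator, RCLike.star_def, Complex.conj_ofReal]

theorem isHermitian_rho (a b : ℝ) : (rho d a b).IsHermitian := by
  rw [rho_eq_brauerOperator]
  exact isHermitian_brauerOperator _ _ _

theorem trace_rho (hd : d ≠ 0) (a b : ℝ) : (rho d a b).trace = 1 := by
  rw [rho_eq_brauerOperator, trace_brauerOperator]
  push_cast
  field_simp
  ring

theorem trace_mul_nonneg_iff_of_isHermitian {n : Type*} [Fintype n] {A B : Matrix n n ℂ}
    (hA : A.IsHermitian) (hB : B.IsHermitian) : 0 ≤ (A * B).trace ↔ 0 ≤ (A * B).trace.re := by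
  have hreal : star (A * B).trace = (A * B).trace := by
    rw [← trace_conjTranspose, conjTranspose_mul, hA.eq, hB.eq, trace_mul_comm]
  rw [Complex.nonneg_iff, and_iff_left (Complex.conj_eq_iff_im.1 hreal).symm]

theorem brauerOperator_eq_smul_choiMatrix_lmap (hd : d ≠ 0) {α β γ s : ℝ}
    (hs : α * d + β + γ = s) (hs0 : s ≠ 0) :
    brauerOperator d α β γ = (s : ℂ) • choiMatrix (Lmap d (β / s) (γ / s)) := by
  have hα : s * ((1 - β / s - γ / s) / d) = α := by
    field_simp
    linarith
  rw [choiMatrix_lmap, smul_brauerOperator]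
  simp only [← Complex.ofReal_mul, hα, mul_div_cancel₀ _ hs0]

theorem exists_brauerOperator_witness (hd : 2 ≤ d) (h : rho d a b ∉ SchmidtSet d d k) :
    ∃ α β γ : ℝ, (∀ Y ∈ SchmidtSet d d k, 0 ≤ (brauerOperator d α β γ * Y).trace.re) ∧
      (brauerOperator d α β γ * rho d a b).trace.re < 0 := by
  obtain ⟨W, hW, hcomm, hnonneg, hneg⟩ := exists_invariant_witness (schmidtCone d d k)
    (fun Y hY => (posSemidef_of_mem_schmidtSet hY).isHermitian) (isHermitian_rho a b) h
  have hinv : IsOrthogonallyInvariant W := fun O hO =>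
    hcomm _ (realTensorSquare_mem_unitary hO)
      (rho_eq_brauerOperator a b ▸ isOrthogonallyInvariant_brauerOperator _ _ _ O hO)
      fun _ hY => kronecker_conj_mem_schmidtSet _ _ hY
  obtain ⟨α, β, γ, rfl⟩ := exists_real_eq_brauerOperator hd hW hinv
  exact ⟨α, β, γ, hnonneg, hneg⟩

/- Adding a small multiple of the identity to the witness keeps it negative on `ρ` and makes its
trace strictly positive, so that it can be rescaled to the Choi matrix of some `L_{p,q}`. -/
theorem exists_brauerOperator_witness_trace_pos (hd : 2 ≤ d) (hk : 1 ≤ k)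
    (h : rho d a b ∉ SchmidtSet d d k) :
    ∃ α β γ : ℝ, 0 < α * d + β + γ ∧
      (∀ Y ∈ SchmidtSet d d k, 0 ≤ (brauerOperator d α β γ * Y).trace.re) ∧
      (brauerOperator d α β γ * rho d a b).trace.re < 0 := by
  obtain ⟨α, β, γ, hnonneg, hneg⟩ := exists_brauerOperator_witness hd h
  set c := (brauerOperator d α β γ * rho d a b).trace.re
  have hd0 : (0 : ℝ) < d := by positivity
  have hshift (Y : Matrix (Fin d × Fin d) (Fin d × Fin d) ℂ) :
      (brauerOperator d ↑(α - c / 2) β γ * Y).trace.re =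
        (brauerOperator d α β γ * Y).trace.re - c / 2 * Y.trace.re := by
    rw [Complex.ofReal_sub, sub_eq_add_neg, ← brauerOperator_add_smul_one, ← Complex.ofReal_neg,
      Matrix.add_mul, Matrix.smul_mul, Matrix.one_mul, trace_add, trace_smul, smul_eq_mul,
      Complex.add_re, Complex.re_ofReal_mul]
    ring
  refine ⟨α - c / 2, β, γ, ?_, fun Y hY => ?_, ?_⟩
  · have htrace : 0 ≤ α * d ^ 2 + β * d + γ * d := by
      have := hnonneg 1 (one_mem_schmidtSet hk)
      rw [Matrix.mul_one, trace_brauerOperator] at this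
      exact_mod_cast this
    have : 0 ≤ α * d + β + γ := nonneg_of_mul_nonneg_left (b := (d : ℝ)) (by linarith) hd0
    nlinarith
  · have hY0 : 0 ≤ Y.trace.re :=
      (Complex.nonneg_iff.1 (posSemidef_of_mem_schmidtSet hY).trace_nonneg).1
    rw [hshift]
    nlinarith [hnonneg Y hY]
  · rw [hshift, trace_rho (by omega), Complex.one_re]
    linarith

theorem exists_isKPositive_lmap_witness (hd : 2 ≤ d) (hk : 1 ≤ k)
    (h : rho d a b ∉ SchmidtSet d d k) :
    ∃ p q : ℝ, IsKPositive k (Lmap d p q) ∧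
      (choiMatrix (Lmap d p q) * rho d a b).trace.re < 0 := by
  obtain ⟨α, β, γ, hs, hnonneg, hneg⟩ := exists_brauerOperator_witness_trace_pos hd hk h
  set s := α * d + β + γ with hs_def
  refine ⟨β / s, γ / s, ?_⟩
  have htrace (Y : Matrix (Fin d × Fin d) (Fin d × Fin d) ℂ) :
      (brauerOperator d α β γ * Y).trace.re =
        s * (choiMatrix (Lmap d (β / s) (γ / s)) * Y).trace.re := by
    rw [brauerOperator_eq_smul_choiMatrix_lmap (by omega) hs_def.symm hs.ne', Matrix.smul_mul,
      trace_smul, smul_eq_mul, Complex.re_ofReal_mul]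
  have hherm : (choiMatrix (Lmap d (β / s) (γ / s))).IsHermitian := by
    rw [choiMatrix_lmap]
    exact isHermitian_brauerOperator _ _ _
  constructor
  · refine (isKPositive_iff_forall_mem_schmidtSet _).2 fun Y hY => ?_
    rw [trace_mul_nonneg_iff_of_isHermitian hherm (posSemidef_of_mem_schmidtSet hY).isHermitian,
      ← mul_nonneg_iff_of_pos_left hs, ← htrace]
    exact hnonneg Y hY
  · exact neg_of_mul_neg_right (htrace _ ▸ hneg) hs.le

theorem trace_re_choiMatrix_lmap_mul_rho_nonneg_iff (hd : 2 ≤ d) (p q a b : ℝ) :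
    0 ≤ (choiMatrix (Lmap d p q) * rho d a b).trace.re ↔
      -(1 / ((d : ℝ) - 1)) ≤ (d + 1) * (p * a + q * b) + (p * b + q * a) := by
  have h2 : (2 : ℝ) ≤ d := by exact_mod_cast hd
  have h1 : (0 : ℝ) < d - 1 := by linarith
  have h0 : (0 : ℝ) < d := by linarith
  have htrace : (choiMatrix (Lmap d p q) * rho d a b).trace =
      (((d - 1) / d * ((d + 1) * (p * a + q * b) + (p * b + q * a) + 1 / (d - 1)) : ℝ) : ℂ) := by
    rw [choiMatrix_lmap, rho_eq_brauerOperator, trace_brauerOperator_mul_brauerOperator]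
    have : (d : ℂ) ≠ 0 := by exact_mod_cast h0.ne'
    have : (d : ℂ) - 1 ≠ 0 := by exact_mod_cast h1.ne'
    push_cast
    field_simp
    ring
  rw [htrace, Complex.ofReal_re, mul_nonneg_iff_of_pos_left (div_pos h1 h0),
    ← neg_le_iff_add_nonneg]

end Duality

/-- For `d ≥ 2` and `1 ≤ k ≤ d`: `ρ^{(d)}_{a,b} ∈ Sch_k` iff for all
real `p, q` such that `L^{(d)}_{p,q}` is `k`-positive,
`(d+1)(pa + qb) + (pb + qa) ≥ -1/(d-1)`. -/
theorem rho_schmidt_iff_pairing {d k : ℕ} (hd : 2 ≤ d) (hk : 1 ≤ k) (hkd : k ≤ d)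
    (a b : ℝ) :
    rho d a b ∈ SchmidtSet d d k ↔
      ∀ p q : ℝ, IsKPositive k (Lmap d p q) →
        -(1 / ((d : ℝ) - 1)) ≤ ((d : ℝ) + 1) * (p * a + q * b) + (p * b + q * a) := by
  simp only [← trace_re_choiMatrix_lmap_mul_rho_nonneg_iff hd]
  constructor
  · intro hmem p q hpos
    exact (Complex.nonneg_iff.1
      ((isKPositive_iff_forall_mem_schmidtSet _).1 hpos _ hmem)).1
  · intro hpair
    by_contra hmem
    obtain ⟨p, q, hpos, hneg⟩ := exists_isKPositive_lmap_witness hd hk hmem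
    exact hneg.not_ge (hpair p q hpos)

end
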